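/- (Theorem: Bethe stationary points are AMP fixed points.) Let ρ ∈ [0,1], Δ > 0, F ∈ ℝ^{M×N}, y ∈ ℝ^M. A point (R,Σ,a,c) with all Σ_i > 0 and Δ + ∑_j F_{μj}² c_j > 0 for all μ is a stationary point of the unconstrained Bethe free energy F_B (all partial derivatives with respect to each R_i, each Σ_i, each a_i and each c_i vanish) if and only if for every i: (i) 1/Σ_i² = ∑_μ F_{μi}²/(Δ + ∑_j F_{μj}² c_j), (ii) R_i = a_i + (Σ_i²/Δ)·∑_μ F_{μi}·(y_μ − ∑_j F_{μj} a_j), (iii) a_i = f_a(R_i,Σ_i), and (iv) c_i = f_c(R_i,Σ_i); these are exactly the fixed-point equations of the AMP algorithm. -/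

import Mathlib

open MeasureTheory ProbabilityTheory

/-- The prior `P₀ = ρ·N(0,1) + (1-ρ)·δ₀`. -/
noncomputable def P0 (ρ : ℝ) : Measure ℝ :=
  ENNReal.ofReal ρ • gaussianReal 0 1 + ENNReal.ofReal (1 - ρ) • Measure.dirac 0

/-- Partition function `Z(R,Σ) = ∫ exp(-(x-R)²/(2Σ²)) dP₀(x)`. -/
noncomputable def Zpart (ρ R σ : ℝ) : ℝ :=
  ∫ x, Real.exp (-(x - R) ^ 2 / (2 * σ ^ 2)) ∂(P0 ρ)

/-- Posterior mean `f_a(R,Σ)`. -/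
noncomputable def fa (ρ R σ : ℝ) : ℝ :=
  (Zpart ρ R σ)⁻¹ * ∫ x, x * Real.exp (-(x - R) ^ 2 / (2 * σ ^ 2)) ∂(P0 ρ)

/-- Posterior variance `f_c(R,Σ)`. -/
noncomputable def fc (ρ R σ : ℝ) : ℝ :=
  (Zpart ρ R σ)⁻¹ * (∫ x, x ^ 2 * Real.exp (-(x - R) ^ 2 / (2 * σ ^ 2)) ∂(P0 ρ))
    - fa ρ R σ ^ 2

/-- The (unconstrained) Bethe free energy `F_B(R,Σ,a,c)`. -/
noncomputable def FB (ρ : ℝ) {M N : ℕ} (F : Fin M → Fin N → ℝ) (y : Fin M → ℝ)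
    (Δ : ℝ) (R Sv a c : Fin N → ℝ) : ℝ :=
  1 / (2 * Δ) * ∑ μ, (y μ - ∑ i, F μ i * a i) ^ 2
    + (M : ℝ) / 2 * Real.log (2 * Real.pi * Δ)
    + 1 / 2 * ∑ μ, Real.log (1 + (∑ i, F μ i ^ 2 * c i) / Δ)
    - ∑ i, (Real.log (Zpart ρ (R i) (Sv i)) + (c i + (a i - R i) ^ 2) / (2 * Sv i ^ 2))

/-!
For a fixed prior, `log Z` is a log-partition function, so its derivatives are expectations under
the posterior, i.e. the prior tilted by the Gaussian exponent `-(x - r)² / (2σ²)`: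
`∂ᵣ log Z = 𝔼[x - r] / σ²` and `∂_σ log Z = 𝔼[(x - r)²] / σ³`. As
`𝔼[(x - r)²] = Var + (𝔼[x] - r)²`, the `R`- and `Σ`-derivatives of the Bethe free energy vanish
together exactly when `a` and `c` are the posterior mean and variance. The `a`- and `c`-derivatives
are explicit and give the equations for `R` and `Σ`.
-/

section GibbsMeasure

open Topology

variable {α : Type*} {mα : MeasurableSpace α} {P : Measure α}

lemma integral_tilted_eq_inv_mul_integral (f g : α → ℝ) :
    ∫ x, g x ∂(P.tilted f) = (∫ x, Real.exp (f x) ∂P)⁻¹ * ∫ x, g x * Real.exp (f x) ∂P := by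
  rw [integral_tilted, ← integral_const_mul]
  congr 1 with x
  rw [smul_eq_mul]
  ring

lemma hasDerivAt_log_integral_exp [NeZero P] {φ φ' : ℝ → α → ℝ} {bound : α → ℝ} {s : Set ℝ}
    {t₀ : ℝ} (hs : s ∈ 𝓝 t₀) (hφ_meas : ∀ᶠ t in 𝓝 t₀, AEStronglyMeasurable (φ t) P)
    (hφ_int : Integrable (fun x => Real.exp (φ t₀ x)) P)
    (hφ'_meas : AEStronglyMeasurable (φ' t₀) P)
    (h_bound : ∀ᵐ x ∂P, ∀ t ∈ s, |φ' t x * Real.exp (φ t x)| ≤ bound x)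
    (bound_integrable : Integrable bound P)
    (h_diff : ∀ᵐ x ∂P, ∀ t ∈ s, HasDerivAt (φ · x) (φ' t x) t) :
    HasDerivAt (fun t => Real.log (∫ x, Real.exp (φ t x) ∂P))
      (∫ x, φ' t₀ x ∂(P.tilted (φ t₀))) t₀ := by
  have hZ : HasDerivAt (fun t => ∫ x, Real.exp (φ t x) ∂P)
      (∫ x, φ' t₀ x * Real.exp (φ t₀ x) ∂P) t₀ := by
    refine (hasDerivAt_integral_of_dominated_loc_of_deriv_le
      (F' := fun t x => φ' t x * Real.exp (φ t x)) hs
      (hφ_meas.mono fun t ht => Real.continuous_exp.comp_aestronglyMeasurable ht) hφ_int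
      (hφ'_meas.mul hφ_int.aestronglyMeasurable) h_bound bound_integrable ?_).2
    filter_upwards [h_diff] with x hx t ht
    exact (hx t ht).exp.congr_deriv (mul_comm _ _)
  rw [integral_tilted_eq_inv_mul_integral, inv_mul_eq_div]
  exact hZ.log (integral_exp_pos hφ_int).ne'

end GibbsMeasure

lemma integral_sub_const_sq {Ω : Type*} {mΩ : MeasurableSpace Ω} {P : Measure Ω}
    [IsProbabilityMeasure P] {X : Ω → ℝ} (hX : MemLp X 2 P) (m : ℝ) :
    ∫ ω, (X ω - m) ^ 2 ∂P = Var[X; P] + (P[X] - m) ^ 2 := by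
  have hmean : ∫ ω, (X ω - m) ∂P = P[X] - m := by
    rw [integral_sub (hX.integrable one_le_two) (integrable_const m), integral_const,
      probReal_univ, one_smul]
  have hvar : Var[fun ω => X ω - m; P] = ∫ ω, (X ω - m) ^ 2 ∂P - (∫ ω, (X ω - m) ∂P) ^ 2 :=
    variance_eq_sub (hX.sub (memLp_const m))
  rw [← variance_sub_const hX.aestronglyMeasurable m, hvar, hmean, sub_add_cancel]

section GaussianBounds

variable (u : ℝ) {σ : ℝ}

lemma exp_neg_sq_div_le_one (σ : ℝ) : Real.exp (-u ^ 2 / (2 * σ ^ 2)) ≤ 1 := by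
  rw [Real.exp_le_one_iff, neg_div]
  exact neg_nonpos.2 (by positivity)

lemma abs_mul_exp_neg_sq_div_le (hσ : σ ≠ 0) :
    |u| * Real.exp (-u ^ 2 / (2 * σ ^ 2)) ≤ |σ| := by
  have hamgm : |u| ≤ |σ| * (u ^ 2 / (2 * σ ^ 2) + 1) := by
    have hσ' : 0 < |σ| := abs_pos.2 hσ
    rw [← sq_abs u, ← sq_abs σ]
    field_simp
    nlinarith [sq_nonneg (|u| - |σ|), sq_nonneg |σ|]
  rw [neg_div, Real.exp_neg, ← div_eq_mul_inv, div_le_iff₀ (Real.exp_pos _)]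
  exact hamgm.trans (by gcongr; exact Real.add_one_le_exp _)

lemma sq_mul_exp_neg_sq_div_le (hσ : σ ≠ 0) :
    u ^ 2 * Real.exp (-u ^ 2 / (2 * σ ^ 2)) ≤ 2 * σ ^ 2 := by
  rw [neg_div, Real.exp_neg, ← div_eq_mul_inv, div_le_iff₀ (Real.exp_pos _)]
  calc u ^ 2 = 2 * σ ^ 2 * (u ^ 2 / (2 * σ ^ 2)) := by field_simp
    _ ≤ 2 * σ ^ 2 * Real.exp (u ^ 2 / (2 * σ ^ 2)) := by
      gcongr
      exact (lt_add_one _).le.trans (Real.add_one_le_exp _)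

lemma integrable_exp_neg_sub_sq_div (P : Measure ℝ) [IsFiniteMeasure P] (r σ : ℝ) :
    Integrable (fun x => Real.exp (-(x - r) ^ 2 / (2 * σ ^ 2))) P := by
  refine .of_bound (by fun_prop) 1 (.of_forall fun x => ?_)
  rw [Real.norm_eq_abs, Real.abs_exp]
  exact exp_neg_sq_div_le_one (x - r) σ

end GaussianBounds

/-- The posterior law of a scalar with prior `P`, observed to be `r` through additive Gaussian noise
of standard deviation `σ`. Its mean and variance are the functions `f_a` and `f_c` of the
prior. At `σ = 0` the exponent is a division by zero and this is the normalized prior. -/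
noncomputable def gaussianPosterior (P : Measure ℝ) (r σ : ℝ) : Measure ℝ :=
  P.tilted fun x => -(x - r) ^ 2 / (2 * σ ^ 2)

/-- The function `log Z(r, σ)` of a general prior `P`, i.e. the log-normalization of
`gaussianPosterior P r σ`. The density of the Gaussian noise is not normalized. -/
noncomputable def logEvidence (P : Measure ℝ) (r σ : ℝ) : ℝ :=
  Real.log (∫ x, Real.exp (-(x - r) ^ 2 / (2 * σ ^ 2)) ∂P)

section Posterior

variable (P : Measure ℝ) [IsFiniteMeasure P] [NeZero P] (r : ℝ) {σ : ℝ}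

instance isProbabilityMeasure_gaussianPosterior (σ : ℝ) :
    IsProbabilityMeasure (gaussianPosterior P r σ) :=
  isProbabilityMeasure_tilted (integrable_exp_neg_sub_sq_div P r σ)

lemma memLp_two_gaussianPosterior (hσ : σ ≠ 0) : MemLp id 2 (gaussianPosterior P r σ) := by
  have hsq : Integrable (fun x => (x - r) ^ 2) (gaussianPosterior P r σ) := by
    refine (integrable_tilted_iff (integrable_exp_neg_sub_sq_div P r σ) _).2
      (.of_bound (by fun_prop) (2 * σ ^ 2) (.of_forall fun x => ?_))
    rw [smul_eq_mul, mul_comm, Real.norm_of_nonneg (by positivity)]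
    exact sq_mul_exp_neg_sq_div_le (x - r) hσ
  have hsub : MemLp (fun x => x - r) 2 (gaussianPosterior P r σ) :=
    (memLp_two_iff_integrable_sq (by fun_prop)).2 hsq
  have hid : (fun x => x - r) + (fun _ => r) = id := funext fun x => sub_add_cancel x r
  exact hid ▸ hsub.add (memLp_const r)

lemma hasDerivAt_logEvidence_center (hσ : σ ≠ 0) :
    HasDerivAt (fun t => logEvidence P t σ) (((gaussianPosterior P r σ)[id] - r) / σ ^ 2) r := by
  have hmean : ∫ x, (x - r) / σ ^ 2 ∂(gaussianPosterior P r σ)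
      = ((gaussianPosterior P r σ)[id] - r) / σ ^ 2 := by
    have hid : Integrable (fun x : ℝ => x) (gaussianPosterior P r σ) :=
      (memLp_two_gaussianPosterior P r hσ).integrable one_le_two
    rw [integral_div, integral_sub hid (integrable_const r), integral_const, probReal_univ,
      one_smul]
    rfl
  rw [← hmean]
  refine hasDerivAt_log_integral_exp (φ := fun t x => -(x - t) ^ 2 / (2 * σ ^ 2))
    (φ' := fun t x => (x - t) / σ ^ 2) (bound := fun _ => |σ| / σ ^ 2) Filter.univ_mem
    (.of_forall fun t => by fun_prop) (integrable_exp_neg_sub_sq_div P r σ) (by fun_prop)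
    (.of_forall fun x t _ => ?_) (integrable_const _) (.of_forall fun x t _ => ?_)
  · rw [div_mul_eq_mul_div, abs_div, abs_mul, Real.abs_exp, abs_sq]
    gcongr
    exact abs_mul_exp_neg_sq_div_le (x - t) hσ
  · refine ((((hasDerivAt_id t).const_sub x).pow 2).neg.div_const (2 * σ ^ 2)).congr_deriv ?_
    simp only [id_eq]
    field_simp
    ring

lemma hasDerivAt_logEvidence_width (hσ : σ ≠ 0) :
    HasDerivAt (fun s => logEvidence P r s)
      ((Var[id; gaussianPosterior P r σ] + ((gaussianPosterior P r σ)[id] - r) ^ 2) / σ ^ 3) σ := by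
  rw [← integral_sub_const_sq (memLp_two_gaussianPosterior P r hσ), ← integral_div]
  refine hasDerivAt_log_integral_exp (φ := fun s x => -(x - r) ^ 2 / (2 * s ^ 2))
    (φ' := fun s x => (x - r) ^ 2 / s ^ 3) (bound := fun _ => 4 / |σ|)
    (continuous_abs.continuousAt.eventually_const_lt (half_lt_self (abs_pos.2 hσ)))
    (.of_forall fun s => by fun_prop) (integrable_exp_neg_sub_sq_div P r σ) (by fun_prop)
    (.of_forall fun x s hs => ?_) (integrable_const _) (.of_forall fun x s hs => ?_)
  all_goals
    have hσ' : 0 < |σ| := abs_pos.2 hσ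
    have hs_pos : 0 < |s| := (half_pos hσ').trans hs
    have hs_ne : s ≠ 0 := abs_pos.1 hs_pos
  · calc |(x - r) ^ 2 / s ^ 3 * Real.exp (-(x - r) ^ 2 / (2 * s ^ 2))|
        = (x - r) ^ 2 * Real.exp (-(x - r) ^ 2 / (2 * s ^ 2)) / |s| ^ 3 := by
          rw [div_mul_eq_mul_div, abs_div, abs_mul, Real.abs_exp, abs_sq, abs_pow]
      _ ≤ 2 * s ^ 2 / |s| ^ 3 := by
          gcongr ?_ / _
          exact sq_mul_exp_neg_sq_div_le (x - r) hs_ne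
      _ = 2 / |s| := by
          rw [← sq_abs s]
          field_simp
      _ ≤ 4 / |σ| := by
          rw [div_le_div_iff₀ hs_pos hσ']
          linarith [show |σ| / 2 < |s| from hs]
  · refine ((hasDerivAt_const s (-(x - r) ^ 2)).div (((hasDerivAt_id s).pow 2).const_mul 2)
      (mul_ne_zero two_ne_zero (pow_ne_zero 2 hs_ne))).congr_deriv ?_
    simp only [id_eq, Pi.pow_apply]
    field_simp
    ring

end Posterior

/-- The summand that one coordinate contributes, with a minus sign, to the Bethe free energy. The
arguments `r` and `σ` enter the free energy only through these summands. -/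
noncomputable def betheSite (P : Measure ℝ) (r σ a c : ℝ) : ℝ :=
  logEvidence P r σ + (c + (a - r) ^ 2) / (2 * σ ^ 2)

section BetheSite

variable (P : Measure ℝ) (r : ℝ) {σ : ℝ} (a c : ℝ)

lemma hasDerivAt_betheSite_center [IsFiniteMeasure P] [NeZero P] (hσ : σ ≠ 0) :
    HasDerivAt (fun t => betheSite P t σ a c) (((gaussianPosterior P r σ)[id] - a) / σ ^ 2) r := by
  refine ((hasDerivAt_logEvidence_center P r hσ).add
    (((((hasDerivAt_id r).const_sub a).pow 2).const_add c).div_const (2 * σ ^ 2))).congr_deriv ?_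
  simp only [id_eq]
  field_simp
  ring

lemma hasDerivAt_betheSite_width [IsFiniteMeasure P] [NeZero P] (hσ : σ ≠ 0) :
    HasDerivAt (fun s => betheSite P r s a c)
      ((Var[id; gaussianPosterior P r σ] + ((gaussianPosterior P r σ)[id] - r) ^ 2
        - (c + (a - r) ^ 2)) / σ ^ 3) σ := by
  refine ((hasDerivAt_logEvidence_width P r hσ).add
    ((hasDerivAt_const σ (c + (a - r) ^ 2)).div (((hasDerivAt_id σ).pow 2).const_mul 2)
      (mul_ne_zero two_ne_zero (pow_ne_zero 2 hσ)))).congr_deriv ?_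
  simp only [id_eq, Pi.pow_apply]
  field_simp
  ring

lemma hasDerivAt_betheSite_mean (σ : ℝ) :
    HasDerivAt (fun t => betheSite P r σ t c) ((a - r) / σ ^ 2) a := by
  refine ((((((hasDerivAt_id a).sub_const r).pow 2).const_add c).div_const
    (2 * σ ^ 2)).const_add _).congr_deriv ?_
  simp only [id_eq]
  field_simp
  ring

lemma hasDerivAt_betheSite_variance (σ : ℝ) :
    HasDerivAt (fun t => betheSite P r σ a t) (1 / (2 * σ ^ 2)) c :=
  (((hasDerivAt_id c).add_const _).div_const _).const_add _

end BetheSite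

lemma hasDerivAt_sum_update {𝕜 E ι : Type*} [NontriviallyNormedField 𝕜] [NormedAddCommGroup E]
    [NormedSpace 𝕜 E] [Fintype ι] [DecidableEq ι] (g : ι → 𝕜 → E) (v : ι → 𝕜) (i : ι) {d : E}
    (h : HasDerivAt (g i) d (v i)) :
    HasDerivAt (fun t => ∑ j, g j (Function.update v i t j)) d (v i) := by
  have hterm : ∀ j ∈ Finset.univ, HasDerivAt (fun t => g j (Function.update v i t j))
      (if j = i then d else 0) (v i) := by
    intro j _
    rcases eq_or_ne j i with rfl | hj
    · simpa using h
    · simpa [hj] using hasDerivAt_const (v i) (g j (v j))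
  simpa using HasDerivAt.fun_sum hterm

/-- The unconstrained Bethe free energy of the linear model `y = F x + noise` with noise variance
`Δ`, for a general prior `P` on the coordinates of `x` and arbitrary finite index types. -/
noncomputable def betheFreeEnergy (P : Measure ℝ) {m n : Type*} [Fintype m] [Fintype n]
    (F : m → n → ℝ) (y : m → ℝ) (Δ : ℝ) (R S a c : n → ℝ) : ℝ :=
  1 / (2 * Δ) * ∑ μ, (y μ - ∑ i, F μ i * a i) ^ 2
    + (Fintype.card m : ℝ) / 2 * Real.log (2 * Real.pi * Δ)
    + 1 / 2 * ∑ μ, Real.log (1 + (∑ i, F μ i ^ 2 * c i) / Δ)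
    - ∑ i, betheSite P (R i) (S i) (a i) (c i)

section BetheFreeEnergy

variable (P : Measure ℝ) {m n : Type*} [Fintype m] [Fintype n] [DecidableEq n] (F : m → n → ℝ)
  (y : m → ℝ) (Δ : ℝ) (R S a c : n → ℝ) (i : n)

lemma hasDerivAt_betheFreeEnergy_center [IsFiniteMeasure P] [NeZero P] (hS : S i ≠ 0) :
    HasDerivAt (fun t => betheFreeEnergy P F y Δ (Function.update R i t) S a c)
      ((a i - (gaussianPosterior P (R i) (S i))[id]) / S i ^ 2) (R i) := by
  refine ((hasDerivAt_sum_update (fun j t => betheSite P t (S j) (a j) (c j)) R i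
    (hasDerivAt_betheSite_center P (R i) (a i) (c i) hS)).const_sub _).congr_deriv ?_
  ring

lemma hasDerivAt_betheFreeEnergy_width [IsFiniteMeasure P] [NeZero P] (hS : S i ≠ 0) :
    HasDerivAt (fun t => betheFreeEnergy P F y Δ R (Function.update S i t) a c)
      ((c i + (a i - R i) ^ 2 - (Var[id; gaussianPosterior P (R i) (S i)]
        + ((gaussianPosterior P (R i) (S i))[id] - R i) ^ 2)) / S i ^ 3) (S i) := by
  refine ((hasDerivAt_sum_update (fun j t => betheSite P (R j) t (a j) (c j)) S i
    (hasDerivAt_betheSite_width P (R i) (a i) (c i) hS)).const_sub _).congr_deriv ?_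
  ring

lemma hasDerivAt_betheFreeEnergy_mean :
    HasDerivAt (fun t => betheFreeEnergy P F y Δ R S (Function.update a i t) c)
      ((R i - a i) / S i ^ 2 - (∑ μ, F μ i * (y μ - ∑ j, F μ j * a j)) / Δ) (a i) := by
  have hresidual : ∀ μ ∈ Finset.univ,
      HasDerivAt (fun t => (y μ - ∑ j, F μ j * Function.update a i t j) ^ 2)
        (-2 * (F μ i * (y μ - ∑ j, F μ j * a j))) (a i) := by
    intro μ _
    refine (((hasDerivAt_sum_update (fun j t => F μ j * t) a i
      ((hasDerivAt_id (a i)).const_mul (F μ i))).const_sub (y μ)).pow 2).congr_deriv ?_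
    simp only [Function.update_eq_self]
    ring
  refine (((((HasDerivAt.fun_sum hresidual).const_mul (1 / (2 * Δ))).add_const _).add_const _).sub
    (hasDerivAt_sum_update (fun j t => betheSite P (R j) (S j) t (c j)) a i
      (hasDerivAt_betheSite_mean P (R i) (a i) (c i) (S i)))).congr_deriv ?_
  rw [← Finset.mul_sum]
  ring

lemma hasDerivAt_betheFreeEnergy_variance (hΔ : Δ ≠ 0) (hV : ∀ μ, Δ + ∑ j, F μ j ^ 2 * c j ≠ 0) :
    HasDerivAt (fun t => betheFreeEnergy P F y Δ R S a (Function.update c i t))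
      ((∑ μ, F μ i ^ 2 / (Δ + ∑ j, F μ j ^ 2 * c j) - 1 / S i ^ 2) / 2) (c i) := by
  have hlog : ∀ μ ∈ Finset.univ,
      HasDerivAt (fun t => Real.log (1 + (∑ j, F μ j ^ 2 * Function.update c i t j) / Δ))
        (F μ i ^ 2 / (Δ + ∑ j, F μ j ^ 2 * c j)) (c i) := by
    intro μ _
    have hfrac : 1 + (∑ j, F μ j ^ 2 * c j) / Δ = (Δ + ∑ j, F μ j ^ 2 * c j) / Δ := by
      rw [add_div, div_self hΔ]
    refine ((((hasDerivAt_sum_update (fun j t => F μ j ^ 2 * t) c i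
      ((hasDerivAt_id (c i)).const_mul (F μ i ^ 2))).div_const Δ).const_add 1).log
        ?_).congr_deriv ?_ <;> simp only [Function.update_eq_self, hfrac]
    · exact div_ne_zero (hV μ) hΔ
    · rw [mul_one, div_div_div_cancel_right₀ hΔ]
  refine ((((HasDerivAt.fun_sum hlog).const_mul (1 / 2)).const_add _).sub
    (hasDerivAt_sum_update (fun j t => betheSite P (R j) (S j) (a j) t) c i
      (hasDerivAt_betheSite_variance P (R i) (a i) (c i) (S i)))).congr_deriv ?_
  ring

end BetheFreeEnergy

lemma hasDerivAt_iff_eq_of_hasDerivAt {𝕜 E : Type*} [NontriviallyNormedField 𝕜]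
    [NormedAddCommGroup E] [NormedSpace 𝕜 E] {f : 𝕜 → E} {d d' : E} {x : 𝕜}
    (h : HasDerivAt f d x) : HasDerivAt f d' x ↔ d = d' :=
  ⟨h.unique, fun hd => hd ▸ h⟩

theorem stmt9_general (P : Measure ℝ) [IsFiniteMeasure P] [NeZero P] {m n : Type*} [Fintype m]
    [Fintype n] [DecidableEq n] (F : m → n → ℝ) (y : m → ℝ) (Δ : ℝ) (hΔ : 0 < Δ)
    (R S a c : n → ℝ) (hS : ∀ i, 0 < S i) (hV : ∀ μ, 0 < Δ + ∑ j, F μ j ^ 2 * c j) :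
    ((∀ i, HasDerivAt (fun t => betheFreeEnergy P F y Δ (Function.update R i t) S a c) 0 (R i)) ∧
     (∀ i, HasDerivAt (fun t => betheFreeEnergy P F y Δ R (Function.update S i t) a c) 0 (S i)) ∧
     (∀ i, HasDerivAt (fun t => betheFreeEnergy P F y Δ R S (Function.update a i t) c) 0 (a i)) ∧
     (∀ i, HasDerivAt (fun t => betheFreeEnergy P F y Δ R S a (Function.update c i t)) 0 (c i)))
    ↔ (∀ i,
        1 / S i ^ 2 = ∑ μ, F μ i ^ 2 / (Δ + ∑ j, F μ j ^ 2 * c j) ∧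
        R i = a i + S i ^ 2 / Δ * ∑ μ, F μ i * (y μ - ∑ j, F μ j * a j) ∧
        a i = (gaussianPosterior P (R i) (S i))[id] ∧
        c i = Var[id; gaussianPosterior P (R i) (S i)]) := by
  simp only [← forall_and]
  refine forall_congr' fun i => ?_
  have hSi : S i ≠ 0 := (hS i).ne'
  rw [hasDerivAt_iff_eq_of_hasDerivAt (hasDerivAt_betheFreeEnergy_center P F y Δ R S a c i hSi),
    hasDerivAt_iff_eq_of_hasDerivAt (hasDerivAt_betheFreeEnergy_width P F y Δ R S a c i hSi),
    hasDerivAt_iff_eq_of_hasDerivAt (hasDerivAt_betheFreeEnergy_mean P F y Δ R S a c i),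
    hasDerivAt_iff_eq_of_hasDerivAt
      (hasDerivAt_betheFreeEnergy_variance P F y Δ R S a c i hΔ.ne' fun μ => (hV μ).ne')]
  set mean := (gaussianPosterior P (R i) (S i))[id]
  set var := Var[id; gaussianPosterior P (R i) (S i)]
  have hmean : (a i - mean) / S i ^ 2 = 0 ↔ a i = mean := by
    rw [div_eq_zero_iff, or_iff_left (pow_ne_zero 2 hSi), sub_eq_zero]
  have hcenter : (R i - a i) / S i ^ 2 - (∑ μ, F μ i * (y μ - ∑ j, F μ j * a j)) / Δ = 0 ↔
      R i = a i + S i ^ 2 / Δ * ∑ μ, F μ i * (y μ - ∑ j, F μ j * a j) := by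
    rw [sub_eq_zero, div_eq_iff (pow_ne_zero 2 hSi), sub_eq_iff_eq_add', div_mul_comm]
  have hwidth : (∑ μ, F μ i ^ 2 / (Δ + ∑ j, F μ j ^ 2 * c j) - 1 / S i ^ 2) / 2 = 0 ↔
      1 / S i ^ 2 = ∑ μ, F μ i ^ 2 / (Δ + ∑ j, F μ j ^ 2 * c j) := by
    rw [div_eq_zero_iff, or_iff_left two_ne_zero, sub_eq_zero, eq_comm]
  have hvariance (ha : a i = mean) :
      (c i + (a i - R i) ^ 2 - (var + (mean - R i) ^ 2)) / S i ^ 3 = 0 ↔ c i = var := by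
    rw [div_eq_zero_iff, or_iff_left (pow_ne_zero 3 hSi), ← ha, add_sub_add_right_eq_sub,
      sub_eq_zero]
  rw [hmean, hcenter, hwidth]
  tauto

section SpikeAndSlabPrior

variable {ρ : ℝ}

lemma isProbabilityMeasure_P0 (hρ : ρ ∈ Set.Icc (0 : ℝ) 1) : IsProbabilityMeasure (P0 ρ) := by
  refine ⟨?_⟩
  simp only [P0, Measure.add_apply, Measure.smul_apply, measure_univ, smul_eq_mul, mul_one]
  rw [← ENNReal.ofReal_add hρ.1 (sub_nonneg.2 hρ.2), add_sub_cancel, ENNReal.ofReal_one]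

lemma fa_eq_integral_gaussianPosterior (ρ r σ : ℝ) :
    fa ρ r σ = (gaussianPosterior (P0 ρ) r σ)[id] :=
  (integral_tilted_eq_inv_mul_integral _ _).symm

lemma fc_eq_variance_gaussianPosterior (hρ : ρ ∈ Set.Icc (0 : ℝ) 1) (r : ℝ) {σ : ℝ} (hσ : σ ≠ 0) :
    fc ρ r σ = Var[id; gaussianPosterior (P0 ρ) r σ] := by
  have := isProbabilityMeasure_P0 hρ
  rw [variance_eq_sub (memLp_two_gaussianPosterior (P0 ρ) r hσ),
    ← fa_eq_integral_gaussianPosterior, fc, Zpart, ← integral_tilted_eq_inv_mul_integral]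
  rfl

lemma FB_eq_betheFreeEnergy (ρ : ℝ) {M N : ℕ} (F : Fin M → Fin N → ℝ) (y : Fin M → ℝ)
    (Δ : ℝ) (R Sv a c : Fin N → ℝ) :
    FB ρ F y Δ R Sv a c = betheFreeEnergy (P0 ρ) F y Δ R Sv a c := by
  rw [betheFreeEnergy, Fintype.card_fin]
  rfl

end SpikeAndSlabPrior

/-- Bethe stationary points are AMP fixed points: a point `(R,Σ,a,c)` with
all `Σ_i > 0` and `Δ + ∑_j F_{μj}² c_j > 0` is a stationary point of the unconstrained
Bethe free energy iff the AMP fixed-point equations (i)–(iv) hold. -/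
theorem stmt9 (ρ : ℝ) (hρ : ρ ∈ Set.Icc (0 : ℝ) 1) {M N : ℕ}
    (F : Fin M → Fin N → ℝ) (y : Fin M → ℝ) (Δ : ℝ) (hΔ : 0 < Δ)
    (R Sv a c : Fin N → ℝ) (hS : ∀ i, 0 < Sv i)
    (hV : ∀ μ, 0 < Δ + ∑ j, F μ j ^ 2 * c j) :
    ((∀ i, HasDerivAt (fun t => FB ρ F y Δ (Function.update R i t) Sv a c) 0 (R i)) ∧
     (∀ i, HasDerivAt (fun t => FB ρ F y Δ R (Function.update Sv i t) a c) 0 (Sv i)) ∧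
     (∀ i, HasDerivAt (fun t => FB ρ F y Δ R Sv (Function.update a i t) c) 0 (a i)) ∧
     (∀ i, HasDerivAt (fun t => FB ρ F y Δ R Sv a (Function.update c i t)) 0 (c i)))
    ↔ (∀ i,
        1 / Sv i ^ 2 = ∑ μ, F μ i ^ 2 / (Δ + ∑ j, F μ j ^ 2 * c j) ∧
        R i = a i + Sv i ^ 2 / Δ * ∑ μ, F μ i * (y μ - ∑ j, F μ j * a j) ∧
        a i = fa ρ (R i) (Sv i) ∧
        c i = fc ρ (R i) (Sv i)) := by
  have := isProbabilityMeasure_P0 hρ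
  simp only [FB_eq_betheFreeEnergy, fa_eq_integral_gaussianPosterior,
    fun i => fc_eq_variance_gaussianPosterior hρ (R i) (hS i).ne']
  exact stmt9_general (P0 ρ) F y Δ hΔ R Sv a c hS hV
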